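/- Let V be a simple b-module, t ∈ ℤ_+ with the action of L_t on V injective and L_i V = 0 for all i > t, and let ℓ ∈ ℂ. Then for every integer i > t the actions of L_i and G_{i−1/2} on Ind_ℓ(V) are locally nilpotent; consequently Ind_ℓ(V) is a simple restricted N-module of central charge ℓ. -/

import Mathlib

/-- A module over the Neveu–Schwarz algebra. `L m` is the action of `L_m`,
`G j` is the action of `G_{j - 1/2”}`, `C` is the action of the central element `c`. -/
structure NSRep : Type 1 where
  carrier : Type
  [isAddCommGroup : AddCommGroup carrier]
  [isModule : Module ℂ carrier]
  L : ℤ → carrier →ₗ[ℂ] carrier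
  G : ℤ → carrier →ₗ[ℂ] carrier
  C : carrier →ₗ[ℂ] carrier
  commC_L : ∀ (m : ℤ) (v : carrier), C (L m v) = L m (C v)
  commC_G : ∀ (j : ℤ) (v : carrier), C (G j v) = G j (C v)
  rel_LL : ∀ (m n : ℤ) (v : carrier),
    L m (L n v) - L n (L m v)
      = ((m : ℂ) - n) • L (m + n) v
        + (if m + n = 0 then ((m : ℂ) ^ 3 - m) / 12 else 0) • C v
  rel_LG : ∀ (m j : ℤ) (v : carrier),
    L m (G j v) - G j (L m v) = (((m : ℂ) - 2 * j + 1) / 2) • G (m + j) v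
  rel_GG : ∀ (j k : ℤ) (v : carrier),
    G j (G k v) + G k (G j v)
      = (2 : ℂ) • L (j + k - 1) v
        + (if j + k = 1 then ((j : ℂ) ^ 2 - j) / 3 else 0) • C v

attribute [instance] NSRep.isAddCommGroup NSRep.isModule

def NSRep.Invariant (M : NSRep) (p : Submodule ℂ M.carrier) : Prop :=
  (∀ (m : ℤ), ∀ v ∈ p, M.L m v ∈ p) ∧ (∀ (j : ℤ), ∀ v ∈ p, M.G j v ∈ p) ∧
    (∀ v ∈ p, M.C v ∈ p)

def NSRep.IsSimple (M : NSRep) : Prop :=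
  (∃ v : M.carrier, v ≠ 0) ∧
    ∀ p : Submodule ℂ M.carrier, M.Invariant p → p = ⊥ ∨ p = ⊤

def NSRep.IsRestricted (M : NSRep) : Prop :=
  ∀ v : M.carrier, ∃ N : ℤ, ∀ i : ℤ, N ≤ i → M.L i v = 0 ∧ M.G i v = 0

def NSRep.HasCentralCharge (M : NSRep) (ℓ : ℂ) : Prop :=
  ∀ v : M.carrier, M.C v = ℓ • v

/-- A module over the subalgebra `b = ⊕_{i ≥ 0} ℂ L_i ⊕ ⊕_{i ≥ 1} ℂ G_{i-1/2}`.
`L i` is the action of `L_i` and `G j` is the action of `G_{j + 1/2}`. -/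
structure BRep : Type 1 where
  carrier : Type
  [isAddCommGroup : AddCommGroup carrier]
  [isModule : Module ℂ carrier]
  L : ℕ → carrier →ₗ[ℂ] carrier
  G : ℕ → carrier →ₗ[ℂ] carrier
  rel_LL : ∀ (m n : ℕ) (v : carrier),
    L m (L n v) - L n (L m v) = ((m : ℂ) - n) • L (m + n) v
  rel_LG : ∀ (m j : ℕ) (v : carrier),
    L m (G j v) - G j (L m v) = (((m : ℂ) - 2 * j - 1) / 2) • G (m + j) v
  rel_GG : ∀ (j k : ℕ) (v : carrier),
    G j (G k v) + G k (G j v) = (2 : ℂ) • L (j + k + 1) v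

attribute [instance] BRep.isAddCommGroup BRep.isModule

def BRep.Invariant (V : BRep) (p : Submodule ℂ V.carrier) : Prop :=
  (∀ (i : ℕ), ∀ v ∈ p, V.L i v ∈ p) ∧ (∀ (j : ℕ), ∀ v ∈ p, V.G j v ∈ p)

def BRep.IsSimple (V : BRep) : Prop :=
  (∃ v : V.carrier, v ≠ 0) ∧
    ∀ p : Submodule ℂ V.carrier, V.Invariant p → p = ⊥ ∨ p = ⊤

/-- `ι` is a homomorphism of `b`-modules from the `b`-module `V` to the restriction
of the Neveu–Schwarz module `M` to `b` (under which `BRep.G j = G_{j+1/2}`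
corresponds to `NSRep.G (j+1)`). -/
def IsBLinear (V : BRep) (M : NSRep) (ι : V.carrier →ₗ[ℂ] M.carrier) : Prop :=
  (∀ (i : ℕ) (v : V.carrier), ι (V.L i v) = M.L (i : ℤ) (ι v)) ∧
    (∀ (j : ℕ) (v : V.carrier), ι (V.G j v) = M.G ((j : ℤ) + 1) (ι v))

def IsNSHom (M W : NSRep) (F : M.carrier →ₗ[ℂ] W.carrier) : Prop :=
  (∀ (m : ℤ) (v : M.carrier), F (M.L m v) = W.L m (F v)) ∧
    (∀ (j : ℤ) (v : M.carrier), F (M.G j v) = W.G j (F v)) ∧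
    (∀ v : M.carrier, F (M.C v) = W.C (F v))

/-- `M`, together with the `b`-module map `ι : V → M`, is the induced module
`Ind_ℓ(V) = U(N) ⊗_{U(b)} V / (c - ℓ)`, characterized by its universal property. -/
def IsInduced (ℓ : ℂ) (V : BRep) (M : NSRep) (ι : V.carrier →ₗ[ℂ] M.carrier) : Prop :=
  IsBLinear V M ι ∧ M.HasCentralCharge ℓ ∧
    ∀ W : NSRep, W.HasCentralCharge ℓ →
      ∀ f : V.carrier →ₗ[ℂ] W.carrier, IsBLinear V W f →
        ∃! F : M.carrier →ₗ[ℂ] W.carrier, IsNSHom M W F ∧ F.comp ι = f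

/-- The action of an endomorphism `f` on a module is locally nilpotent if for every vector `v`
there is `n ∈ ℤ_+` with `fⁿ v = 0`. -/
def LocallyNilpotentEnd {α : Type} [AddCommGroup α] [Module ℂ α] (f : α →ₗ[ℂ] α) : Prop :=
  ∀ v : α, ∃ n : ℕ, 0 < n ∧ ((f : Module.End ℂ α) ^ n) v = 0

/-! ### Uniform notation for the Neveu–Schwarz algebra -/

noncomputable def nsS (j k : ℤ) : ℂ := if Even j then 1 else (if Even k then 1 else -1)

noncomputable def nsC (j k : ℤ) : ℂ :=
  if Even j then (if Even k then ((j : ℂ) - k) / 2 else ((j : ℂ) - 2 * k) / 4)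
  else (if Even k then (2 * (j : ℂ) - k) / 4 else 2)

noncomputable def nsO (j : ℤ) : ℂ :=
  if Even j then (((j : ℂ) / 2) ^ 3 - (j : ℂ) / 2) / 12 else ((j : ℂ) ^ 2 - 1) / 12

noncomputable def nsZ (l : ℂ) (j k : ℤ) : ℂ := if j + k = 0 then nsO j * l else 0

section JacobiSec
variable {M : Type} [AddCommGroup M] [Module ℂ M]

noncomputable def nsD (l : ℂ) (E : ℤ → M →ₗ[ℂ] M) (j k : ℤ) (u : M) : M :=
  E j (E k u) - nsS j k • E k (E j u) - nsC j k • E (j + k) u - nsZ l j k • u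

def nsRel (l : ℂ) (E : ℤ → M →ₗ[ℂ] M) : Prop := ∀ j k u, nsD l E j k u = 0

theorem nsC_jac (i j k : ℤ) : nsC j k * nsC i (j + k)
    = nsC i j * nsC (i + j) k + nsS i j * nsC i k * nsC j (i + k) := by
  by_cases hi : Even i <;> by_cases hj : Even j <;> by_cases hk : Even k <;>
    simp [nsC, nsS, hi, hj, hk, Int.even_add] <;> ring

theorem nsZ_jac (l : ℂ) (i j k : ℤ) : nsC j k * nsZ l i (j + k)
    = nsC i j * nsZ l (i + j) k + nsS i j * nsC i k * nsZ l j (i + k) := by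
  by_cases h : i + j + k = 0
  · have h1 : i + (j + k) = 0 := by omega
    have h2 : j + (i + k) = 0 := by omega
    obtain rfl : k = - i - j := by omega
    simp only [nsZ, h, h1, h2, if_true]
    by_cases hi : Even i <;> by_cases hj : Even j <;> 
    simp [nsC, nsS, nsO, hi, hj, Int.even_add, Int.even_sub] <;> ring
  · have h1 : ¬ i + (j + k) = 0 := by omega
    have h2 : ¬ j + (i + k) = 0 := by omega
    simp only [nsZ, h, h1, h2, if_false]
    simp

theorem nsS_add_left (i j k : ℤ) : nsS (i + j) k = nsS i k * nsS j k := by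
  by_cases hi : Even i <;> by_cases hj : Even j <;> by_cases hk : Even k <;>
    simp [nsS, hi, hj, hk, Int.even_add]

theorem nsS_symm (i j : ℤ) : nsS i j = nsS j i := by
  by_cases hi : Even i <;> by_cases hj : Even j <;> simp [nsS, hi, hj]

theorem nsS_sq (i j : ℤ) : nsS i j * nsS i j = 1 := by
  by_cases hi : Even i <;> by_cases hj : Even j <;> simp [nsS, hi, hj]

theorem nsC_symm (i j : ℤ) : nsC j i = - (nsS i j * nsC i j) := by
  by_cases hi : Even i <;> by_cases hj : Even j <;> simp [nsS, nsC, hi, hj] <;> ring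

theorem nsZ_symm (l : ℂ) (i j : ℤ) : nsZ l j i = - (nsS i j * nsZ l i j) := by
  by_cases h : i + j = 0
  · obtain rfl : j = - i := by omega
    by_cases hi : Even i <;> simp [nsS, nsZ, nsO, hi] <;> ring
  · have : ¬ j + i = 0 := by omega
    simp [nsZ, h, this]

theorem nsZ_S (l : ℂ) (i j k : ℤ) : nsZ l j k * (nsS i j * nsS i k) = nsZ l j k := by
  by_cases h : j + k = 0
  · obtain rfl : k = - j := by omega
    by_cases hi : Even i <;> by_cases hj : Even j <;> simp [nsS, hi, hj]
  · simp [nsZ, h]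

theorem nsD_symm (l : ℂ) (E : ℤ → M →ₗ[ℂ] M) (i j : ℤ) (u : M) :
    nsD l E j i u = - (nsS i j • nsD l E i j u) := by
  unfold nsD
  rw [nsC_symm i j, nsZ_symm l i j, nsS_symm j i, add_comm j i]
  have := nsS_sq i j
  linear_combination (norm := module) (- this) • (E j (E i u))

theorem nsD_jac (l : ℂ) (E : ℤ → M →ₗ[ℂ] M) (i j k : ℤ) (u : M) :
    E i (nsD l E j k u) - (nsS i j * nsS i k) • nsD l E j k (E i u)
    = nsD l E i j (E k u) - (nsS i k * nsS j k) • E k (nsD l E i j u)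
      + nsS i j • (E j (nsD l E i k u) - (nsS i j * nsS j k) • nsD l E i k (E j u))
      - nsC j k • nsD l E i (j + k) u + nsC i j • nsD l E (i + j) k u
      + (nsS i j * nsC i k) • nsD l E j (i + k) u := by
  have e1 : i + (j + k) = i + j + k := by ring
  have e2 : j + (i + k) = i + j + k := by ring
  have s1 : nsS i (j + k) = nsS i j * nsS i k := by
    rw [nsS_symm, nsS_add_left, nsS_symm j, nsS_symm k]
  have s2 : nsS j (i + k) = nsS i j * nsS j k := by
    rw [nsS_symm, nsS_add_left, nsS_symm k]
  have hc := nsC_jac i j k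
  have hz := nsZ_jac l i j k
  have q1 := nsS_sq i j
  have q2 := nsS_sq i k
  have q3 := nsS_sq j k
  have z1 := nsZ_S l i j k
  have z2 := nsZ_S l k i j
  have z3 := nsZ_S l j i k
  rw [nsS_symm k i, nsS_symm k j] at z2
  rw [nsS_symm j i] at z3
  have z4 : nsS i j * (nsZ l i k * (nsS i j * nsS j k)) = nsS i j * nsZ l i k := by rw [z3]
  clear z3
  simp only [nsD, map_sub, map_smul, e1, e2, s1, s2, nsS_add_left]
  by_cases hi : Even i <;> by_cases hj : Even j <;> by_cases hk : Even k <;>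
  simp only [nsS, hi, hj, hk, if_true, if_false] at * <;>
  linear_combination (norm := module) (-hc) • (E (i+j+k) u) - hz • u + z1 • E i u - z2 • E k u - z4 • E j u
end JacobiSec

noncomputable def BRep.nsE (V : BRep) (k : ℤ) : V.carrier →ₗ[ℂ] V.carrier :=
  if Even k then V.L (k / 2).toNat else V.G ((k - 1) / 2).toNat

theorem BRep.nsE_even (V : BRep) (m : ℕ) : V.nsE (2 * (m : ℤ)) = V.L m := by
  simp [BRep.nsE]

theorem BRep.nsE_odd (V : BRep) (m : ℕ) : V.nsE (2 * (m : ℤ) + 1) = V.G m := by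
  have : ¬ Even (2 * (m : ℤ) + 1) := by simp
  simp [BRep.nsE]

theorem nat_cases {j : ℤ} (hj : 0 ≤ j) :
    (∃ m : ℕ, j = 2 * (m : ℤ)) ∨ (∃ m : ℕ, j = 2 * (m : ℤ) + 1) := by
  rcases Int.even_or_odd' j with ⟨c, h | h⟩
  · exact Or.inl ⟨c.toNat, by omega⟩
  · exact Or.inr ⟨c.toNat, by omega⟩

theorem BRep.nsE_rel (V : BRep) (l : ℂ) {j k : ℤ} (hj : 0 ≤ j) (hk : 0 ≤ k) (v : V.carrier) :
    nsD l V.nsE j k v = 0 := by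
  have hz : nsZ l j k = 0 := by
    unfold nsZ
    split_ifs with h
    · obtain rfl : j = 0 := by omega
      simp [nsO]
    · rfl
  have o : ∀ n : ℕ, ¬ Even (2 * (n : ℤ) + 1) := by simp
  unfold nsD
  rw [hz]
  rcases nat_cases hj with ⟨m, rfl⟩ | ⟨m, rfl⟩ <;> rcases nat_cases hk with ⟨n, rfl⟩ | ⟨n, rfl⟩
  · have e : 2 * (m : ℤ) + 2 * (n : ℤ) = 2 * ((m + n : ℕ) : ℤ) := by push_cast; ring
    rw [e]
    simp only [V.nsE_even]
    have := V.rel_LL m n v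
    simp [nsS, nsC, o] at this ⊢
    linear_combination (norm := module) this
  · have e : 2 * (m : ℤ) + (2 * (n : ℤ) + 1) = 2 * ((m + n : ℕ) : ℤ) + 1 := by push_cast; ring
    rw [e]
    simp only [V.nsE_even, V.nsE_odd]
    have := V.rel_LG m n v
    simp [nsS, nsC, o] at this ⊢
    linear_combination (norm := module) this
  · have e : (2 * (m : ℤ) + 1) + 2 * (n : ℤ) = 2 * ((n + m : ℕ) : ℤ) + 1 := by push_cast; ring
    rw [e]
    simp only [V.nsE_even, V.nsE_odd]
    have := V.rel_LG n m v
    simp [nsS, nsC, o] at this ⊢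
    linear_combination (norm := module) -this
  · have e : (2 * (m : ℤ) + 1) + (2 * (n : ℤ) + 1) = 2 * ((m + n + 1 : ℕ) : ℤ) := by
      push_cast; ring
    rw [e]
    simp only [V.nsE_even, V.nsE_odd]
    have := V.rel_GG m n v
    simp [nsS, nsC, o] at this ⊢
    linear_combination (norm := module) this

/-! ### A concrete model -/

section Model
variable (V : BRep) (l : ℂ)

noncomputable def mX (n : ℕ) : (List ℕ →₀ V.carrier) →ₗ[ℂ] (List ℕ →₀ V.carrier) :=
  Finsupp.lmapDomain V.carrier ℂ (List.cons n)

theorem mX_single (n : ℕ) (w : List ℕ) (v : V.carrier) :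
    mX V n (Finsupp.single w v) = Finsupp.single (n :: w) v := by
  simp [mX]

noncomputable def mAct : List ℕ → ℤ → V.carrier →ₗ[ℂ] (List ℕ →₀ V.carrier)
  | [], k => if 0 ≤ k then (Finsupp.lsingle []) ∘ₗ V.nsE k
      else Finsupp.lsingle [(-k - 1).toNat]
  | n :: w, k => if 0 ≤ k then
      nsS k (-((n : ℤ) + 1)) • (mX V n ∘ₗ mAct w k)
        + nsC k (-((n : ℤ) + 1)) • mAct w (k + -((n : ℤ) + 1))
        + nsZ l k (-((n : ℤ) + 1)) • Finsupp.lsingle w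
      else Finsupp.lsingle ((-k - 1).toNat :: n :: w)

noncomputable def mE (k : ℤ) : (List ℕ →₀ V.carrier) →ₗ[ℂ] (List ℕ →₀ V.carrier) :=
  Finsupp.lsum ℂ (fun w => mAct V l w k)

theorem mE_single (k : ℤ) (w : List ℕ) (v : V.carrier) :
    mE V l k (Finsupp.single w v) = mAct V l w k v := by
  simp [mE]

theorem mE_neg {k : ℤ} (hk : k < 0) : mE V l k = mX V (-k - 1).toNat := by
  have : ¬ 0 ≤ k := by omega
  refine Finsupp.lhom_ext fun w v => ?_
  rw [mE_single, mX_single]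
  cases w <;> simp [mAct, this]

theorem mE_cons (n : ℕ) : mX V n = mE V l (-((n : ℤ) + 1)) := by
  rw [mE_neg V l (by omega)]
  congr 1
  omega

theorem mE_rel_mixed {k j : ℤ} (hk : 0 ≤ k) (hj : j < 0) (u : List ℕ →₀ V.carrier) :
    nsD l (mE V l) k j u = 0 := by
  obtain ⟨n, rfl⟩ : ∃ n : ℕ, j = -((n : ℤ) + 1) := ⟨(-j - 1).toNat, by omega⟩
  unfold nsD
  rw [← mE_cons]
  induction u using Finsupp.induction_linear with
  | zero => simp
  | add f g hf hg =>
    simp only [map_add, smul_add]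
    linear_combination (norm := module) hf + hg
  | single w v =>
    rw [mX_single, mE_single, mE_single, mE_single]
    simp only [mAct, hk, if_true, LinearMap.add_apply, LinearMap.smul_apply, LinearMap.comp_apply,
      Finsupp.lsingle_apply]
    module

theorem mE_nil {k : ℤ} (hk : 0 ≤ k) (v : V.carrier) :
    mE V l k (Finsupp.single [] v) = Finsupp.single [] (V.nsE k v) := by
  rw [mE_single]; simp [mAct, hk]

noncomputable def mR : Submodule ℂ (List ℕ →₀ V.carrier) :=
  sInf {p | (∀ n, ∀ x ∈ p, mX V n x ∈ p) ∧
    ∀ j k : ℤ, j < 0 → k < 0 → ∀ u, nsD l (mE V l) j k u ∈ p}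

theorem mR_X (n : ℕ) {x} (hx : x ∈ mR V l) : mX V n x ∈ mR V l := by
  simp only [mR, Submodule.mem_sInf, Set.mem_ofPred_eq] at *
  exact fun p hp => hp.1 n x (hx p hp)

theorem mR_D_neg {j k : ℤ} (hj : j < 0) (hk : k < 0) (u) : nsD l (mE V l) j k u ∈ mR V l := by
  simp only [mR, Submodule.mem_sInf, Set.mem_ofPred_eq] at *
  exact fun p hp => hp.2 j k hj hk u

theorem mE_neg_mem {k : ℤ} (hk : k < 0) {x} (hx : x ∈ mR V l) : mE V l k x ∈ mR V l := by
  rw [mE_neg V l hk]; exact mR_X V l _ hx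

theorem mR_D_one {j k : ℤ} (hk : k < 0) (u) : nsD l (mE V l) j k u ∈ mR V l := by
  by_cases hj : 0 ≤ j
  · rw [mE_rel_mixed V l hj hk]; exact zero_mem _
  · exact mR_D_neg V l (by omega) hk u

theorem mR_D_one' {j k : ℤ} (hj : j < 0) (u) : nsD l (mE V l) j k u ∈ mR V l := by
  rw [nsD_symm]
  exact neg_mem (Submodule.smul_mem _ _ (mR_D_one V l hj u))

theorem mR_E (k : ℤ) {x} (hx : x ∈ mR V l) : mE V l k x ∈ mR V l := by
  let p : Submodule ℂ (List ℕ →₀ V.carrier) := mR V l ⊓ ⨅ k, (mR V l).comap (mE V l k)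
  have hp : ∀ x, x ∈ p ↔ x ∈ mR V l ∧ ∀ k, mE V l k x ∈ mR V l := by
    intro x; simp [p]
  suffices h : mR V l ≤ p from ((hp x).1 (h hx)).2 k
  refine sInf_le ⟨?_, ?_⟩
  · intro n x hx
    rw [hp] at hx ⊢
    refine ⟨mR_X V l n hx.1, fun k => ?_⟩
    by_cases hk : 0 ≤ k
    · have := mE_rel_mixed V l (j := -((n : ℤ) + 1)) hk (by omega) x
      unfold nsD at this
      rw [← mE_cons] at this
      have e : mE V l k (mX V n x) = nsS k (-((n : ℤ) + 1)) • mX V n (mE V l k x)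
        + nsC k (-((n : ℤ) + 1)) • mE V l (k + -((n : ℤ) + 1)) x
        + nsZ l k (-((n : ℤ) + 1)) • x := by
        linear_combination (norm := module) this
      rw [e]
      exact add_mem (add_mem (Submodule.smul_mem _ _ (mR_X V l n (hx.2 k)))
        (Submodule.smul_mem _ _ (hx.2 _))) (Submodule.smul_mem _ _ hx.1)
    · exact mE_neg_mem V l (by omega) (mR_X V l n hx.1)
  · intro a b ha hb u
    rw [hp]
    refine ⟨mR_D_neg V l ha hb u, fun k => ?_⟩
    by_cases hk : 0 ≤ k
    · have := nsD_jac l (mE V l) k a b u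
      rw [mE_rel_mixed V l hk ha, mE_rel_mixed V l hk ha, mE_rel_mixed V l hk hb,
        mE_rel_mixed V l hk hb, mE_rel_mixed V l (j := a + b) hk (by omega), sub_eq_iff_eq_add] at this
      rw [this]
      simp only [map_zero, smul_zero, sub_zero, zero_add]
      refine add_mem (add_mem (Submodule.smul_mem _ _ ?_) (Submodule.smul_mem _ _ ?_))
        (Submodule.smul_mem _ _ ?_)
      · exact mR_D_one V l hb u
      · exact mR_D_one' V l ha u
      · exact mR_D_neg V l ha hb _
    · exact mE_neg_mem V l (by omega) (mR_D_neg V l ha hb u)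

theorem mR_D_add (j k : ℤ) (u v) :
    nsD l (mE V l) j k (u + v) = nsD l (mE V l) j k u + nsD l (mE V l) j k v := by
  unfold nsD
  simp only [map_add]
  module

theorem mR_D_pos_single (w : List ℕ) : ∀ {j k : ℤ} (_ : 0 ≤ j) (_ : 0 ≤ k) (v : V.carrier),
    nsD l (mE V l) j k (Finsupp.single w v) ∈ mR V l := by
  induction w with
  | nil =>
    intro j k hj hk v
    have e : nsD l (mE V l) j k (Finsupp.single [] v)
        = Finsupp.single [] (nsD l V.nsE j k v) := by
      unfold nsD
      rw [mE_nil V l hj, mE_nil V l hk, mE_nil V l hj, mE_nil V l hk, mE_nil V l (by omega)]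
      simp
    rw [e, V.nsE_rel l hj hk]
    simp
  | cons n w ih =>
    intro j k hj hk v
    have ih' : ∀ j k : ℤ, nsD l (mE V l) j k (Finsupp.single w v) ∈ mR V l := by
      intro j k
      by_cases hj : 0 ≤ j
      · by_cases hk : 0 ≤ k
        · exact ih hj hk v
        · exact mR_D_one V l (by omega) _
      · exact mR_D_one' V l (by omega) _
    rw [← mX_single, mE_cons V l n]
    set a : ℤ := -((n : ℤ) + 1)
    have ha : a < 0 := by omega
    have := nsD_jac l (mE V l) j k a (Finsupp.single w v)
    rw [mE_rel_mixed V l hk ha, mE_rel_mixed V l hk ha, mE_rel_mixed V l hj ha,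
      mE_rel_mixed V l hj ha] at this
    have e : nsD l (mE V l) j k (mE V l a (Finsupp.single w v)) =
      (nsS j a * nsS k a) • mE V l a (nsD l (mE V l) j k (Finsupp.single w v))
      + nsC k a • nsD l (mE V l) j (k + a) (Finsupp.single w v)
      - nsC j k • nsD l (mE V l) (j + k) a (Finsupp.single w v)
      - (nsS j k * nsC j a) • nsD l (mE V l) k (j + a) (Finsupp.single w v) := by
      simp only [map_zero, smul_zero, sub_zero, zero_sub] at this
      linear_combination (norm := module) -this
    rw [e]
    exact sub_mem (sub_mem (add_mem (Submodule.smul_mem _ _ (mE_neg_mem V l ha (ih' _ _)))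
      (Submodule.smul_mem _ _ (ih' _ _))) (Submodule.smul_mem _ _ (ih' _ _)))
      (Submodule.smul_mem _ _ (ih' _ _))

theorem mR_D (j k : ℤ) (u) : nsD l (mE V l) j k u ∈ mR V l := by
  by_cases hj : 0 ≤ j
  · by_cases hk : 0 ≤ k
    · induction u using Finsupp.induction_linear with
      | zero => simp [nsD]
      | add f g hf hg => rw [mR_D_add]; exact add_mem hf hg
      | single w v => exact mR_D_pos_single V l w hj hk v
    · exact mR_D_one V l (by omega) _
  · exact mR_D_one' V l (by omega) _

theorem mX_nil (n : ℕ) (x) : (mX V n x) [] = 0 := by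
  induction x using Finsupp.induction_linear with
  | zero => simp
  | add f g hf hg => simp [hf, hg]
  | single w v => rw [mX_single]; simp

theorem mR_nil {x} (hx : x ∈ mR V l) : x [] = 0 := by
  suffices h : mR V l ≤ LinearMap.ker (Finsupp.lapply (R := ℂ) (M := V.carrier) ([] : List ℕ)) by
    simpa using h hx
  refine sInf_le ⟨?_, ?_⟩
  · intro n x _
    simpa using mX_nil V n x
  · intro j k hj hk u
    have : nsZ l j k = 0 := by simp [nsZ]; omega
    simp only [LinearMap.mem_ker, Finsupp.lapply_apply, nsD, this, mE_neg V l hj, mE_neg V l hk,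
      mE_neg V l (show j + k < 0 by omega)]
    simp [mX_nil]

noncomputable def mQE (k : ℤ) :
    ((List ℕ →₀ V.carrier) ⧸ mR V l) →ₗ[ℂ] ((List ℕ →₀ V.carrier) ⧸ mR V l) :=
  (mR V l).mapQ (mR V l) (mE V l k) (fun _ hx => mR_E V l k hx)

theorem mQE_rel : nsRel l (mQE V l) := by
  intro j k u
  obtain ⟨u, rfl⟩ := Submodule.Quotient.mk_surjective _ u
  have := (Submodule.Quotient.mk_eq_zero _).2 (mR_D V l j k u)
  simpa [nsD, mQE] using this
end Model

/-! ### Passing between the two presentations -/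

noncomputable def nsRepOf {M : Type} [AddCommGroup M] [Module ℂ M] (l : ℂ) (E : ℤ → M →ₗ[ℂ] M)
    (h : nsRel l E) : NSRep where
  carrier := M
  L m := E (2 * m)
  G j := E (2 * j - 1)
  C := l • LinearMap.id
  commC_L m v := by simp
  commC_G m v := by simp
  rel_LL m n v := by
    have := h (2 * m) (2 * n) v
    have e : (2 * m + 2 * n = 0) = (m + n = 0) := by simp; omega
    have e' : 2 * m + 2 * n = 2 * (m + n) := by ring
    unfold nsD nsZ at this
    simp only [e] at this
    rw [e'] at this
    simp [nsS, nsC, nsO] at this ⊢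
    split_ifs at this ⊢ <;> linear_combination (norm := module) this
  rel_LG m n v := by
    have := h (2 * m) (2 * n - 1) v
    have e : ¬ (2 * m + (2 * n - 1) = 0) := by omega
    have e' : 2 * m + (2 * n - 1) = 2 * (m + n) - 1 := by ring
    have o : ¬ Even (2 * n - 1) := by simp [Int.even_sub]
    unfold nsD nsZ at this
    simp only [e] at this
    rw [e'] at this
    simp [nsS, nsC, nsO, o] at this ⊢
    linear_combination (norm := module) this
  rel_GG m n v := by
    have := h (2 * m - 1) (2 * n - 1) v
    have e : (2 * m - 1 + (2 * n - 1) = 0) = (m + n = 1) := by simp; omega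
    have e' : 2 * m - 1 + (2 * n - 1) = 2 * (m + n - 1) := by ring
    have o : ∀ n : ℤ, ¬ Even (2 * n - 1) := by simp [Int.even_sub]
    unfold nsD nsZ at this
    simp only [e] at this
    rw [e'] at this
    simp [nsS, nsC, nsO, o] at this ⊢
    split_ifs at this ⊢ <;> linear_combination (norm := module) this

noncomputable def NSRep.nsE (M : NSRep) (k : ℤ) : M.carrier →ₗ[ℂ] M.carrier :=
  if Even k then M.L (k / 2) else M.G ((k + 1) / 2)

theorem NSRep.nsE_even (M : NSRep) (m : ℤ) : M.nsE (2 * m) = M.L m := by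
  simp [NSRep.nsE]

theorem NSRep.nsE_odd (M : NSRep) (m : ℤ) : M.nsE (2 * m - 1) = M.G m := by
  have : ¬ Even (2 * m - 1) := by simp [Int.even_sub]
  simp [NSRep.nsE, this]

theorem int_cases (j : ℤ) : (∃ m : ℤ, j = 2 * m) ∨ (∃ m : ℤ, j = 2 * m - 1) := by
  rcases Int.even_or_odd' j with ⟨c, h | h⟩
  · exact Or.inl ⟨c, by omega⟩
  · exact Or.inr ⟨c + 1, by omega⟩

theorem NSRep.nsE_rel (M : NSRep) (l : ℂ) (hM : M.HasCentralCharge l) : nsRel l M.nsE := by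
  intro j k v
  have o : ∀ n : ℤ, ¬ Even (2 * n - 1) := by simp [Int.even_sub]
  have hC := hM v
  unfold nsD nsZ
  rcases int_cases j with ⟨m, rfl⟩ | ⟨m, rfl⟩ <;> rcases int_cases k with ⟨n, rfl⟩ | ⟨n, rfl⟩
  · have e : (2 * m + 2 * n = 0) = (m + n = 0) := by simp; omega
    have e' : 2 * m + 2 * n = 2 * (m + n) := by ring
    simp only [e]
    rw [e']
    simp only [M.nsE_even]
    have := M.rel_LL m n v
    rw [hC] at this
    simp [nsS, nsC, nsO] at this ⊢
    split_ifs at this ⊢ <;> linear_combination (norm := module) this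
  · have e : ¬ (2 * m + (2 * n - 1) = 0) := by omega
    have e' : 2 * m + (2 * n - 1) = 2 * (m + n) - 1 := by ring
    simp only [e]
    rw [e']
    simp only [M.nsE_even, M.nsE_odd]
    have := M.rel_LG m n v
    simp [nsS, nsC, nsO, o] at this ⊢
    linear_combination (norm := module) this
  · have e : ¬ (2 * m - 1 + 2 * n = 0) := by omega
    have e' : 2 * m - 1 + 2 * n = 2 * (n + m) - 1 := by ring
    simp only [e]
    rw [e']
    simp only [M.nsE_even, M.nsE_odd]
    have := M.rel_LG n m v
    simp [nsS, nsC, nsO, o] at this ⊢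
    linear_combination (norm := module) -this
  · have e : (2 * m - 1 + (2 * n - 1) = 0) = (m + n = 1) := by simp; omega
    have e' : 2 * m - 1 + (2 * n - 1) = 2 * (m + n - 1) := by ring
    simp only [e]
    rw [e']
    simp only [M.nsE_even, M.nsE_odd]
    have := M.rel_GG m n v
    rw [hC] at this
    simp [nsS, nsC, nsO, o] at this ⊢
    split_ifs at this ⊢ <;> linear_combination (norm := module) this

theorem ind_injective (V : BRep) (l : ℂ) (M : NSRep) (i : V.carrier →ₗ[ℂ] M.carrier)
    (hind : IsInduced l V M i) : Function.Injective i := by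
  obtain ⟨_, _, huniv⟩ := hind
  let W := nsRepOf l (mQE V l) (mQE_rel V l)
  let f : V.carrier →ₗ[ℂ] W.carrier := (mR V l).mkQ ∘ₗ Finsupp.lsingle []
  have hf : IsBLinear V W f := by
    constructor
    · intro m v
      have := mE_nil V l (k := 2 * (m : ℤ)) (by omega) v
      rw [V.nsE_even] at this
      change (mR V l).mkQ (Finsupp.single [] (V.L m v)) =
        (mR V l).mkQ (mE V l (2 * (m : ℤ)) (Finsupp.single [] v))
      rw [this]
    · intro m v
      have := mE_nil V l (k := 2 * (m : ℤ) + 1) (by omega) v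
      rw [V.nsE_odd] at this
      change (mR V l).mkQ (Finsupp.single [] (V.G m v)) =
        (mR V l).mkQ (mE V l (2 * ((m : ℤ) + 1) - 1) (Finsupp.single [] v))
      rw [show 2 * ((m : ℤ) + 1) - 1 = 2 * (m : ℤ) + 1 by ring, this]
  have hW : W.HasCentralCharge l := fun v => rfl
  obtain ⟨F, ⟨_, hF⟩, _⟩ := huniv W hW f hf
  rw [injective_iff_map_eq_zero]
  intro v hv
  have h0 : f v = 0 := by rw [← hF]; simp [hv]
  have h1 : Finsupp.single [] v ∈ mR V l := (Submodule.Quotient.mk_eq_zero _).1 h0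
  simpa using mR_nil V l h1

/-! ### The abstract reduction argument -/

section Main
variable {M : Type} [AddCommGroup M] [Module ℂ M]

theorem nsRel.comm {l : ℂ} {E : ℤ → M →ₗ[ℂ] M} (hE : nsRel l E) (j k : ℤ) (u : M) :
    E j (E k u) = nsS j k • E k (E j u) + nsC j k • E (j + k) u + nsZ l j k • u := by
  have := hE j k u
  unfold nsD at this
  linear_combination (norm := module) this

theorem nsRel.comm' {l : ℂ} {E : ℤ → M →ₗ[ℂ] M} (hE : nsRel l E) {j k : ℤ} (h : j + k ≠ 0)
    (u : M) : E j (E k u) = nsS j k • E k (E j u) + nsC j k • E (j + k) u := by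
  rw [hE.comm j k u]
  simp [nsZ, h]

def wd (E : ℤ → M →ₗ[ℂ] M) (w : List ℤ) (x : M) : M := w.foldr (fun m y => E (-m) y) x

def sS (E : ℤ → M →ₗ[ℂ] M) (B : Submodule ℂ M) (n d : ℤ) : Submodule ℂ M :=
  Submodule.span ℂ {y | ∃ w x, x ∈ B ∧ (∀ m ∈ w, n ≤ m) ∧ w.sum = d ∧ y = wd E w x}

def sF (E : ℤ → M →ₗ[ℂ] M) (B : Submodule ℂ M) (d : ℤ) : Submodule ℂ M :=
  Submodule.span ℂ {y | ∃ w x, x ∈ B ∧ (∀ m ∈ w, 1 ≤ m) ∧ w.sum ≤ d ∧ y = wd E w x}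

theorem span_maps {s : Set M} {p : Submodule ℂ M} {f : M →ₗ[ℂ] M} (h : ∀ x ∈ s, f x ∈ p)
    {x : M} (hx : x ∈ Submodule.span ℂ s) : f x ∈ p := by
  have : Submodule.span ℂ s ≤ p.comap f := Submodule.span_le.2 h
  exact this hx

variable {E : ℤ → M →ₗ[ℂ] M} {B : Submodule ℂ M}

theorem sF_mono {d e : ℤ} (h : d ≤ e) : sF E B d ≤ sF E B e := by
  refine Submodule.span_mono ?_
  rintro y ⟨w, x, hx, hw, hs, rfl⟩
  exact ⟨w, x, hx, hw, by omega, rfl⟩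

theorem sS_le_sF {n d : ℤ} (h : 1 ≤ n) : sS E B n d ≤ sF E B d := by
  refine Submodule.span_mono ?_
  rintro y ⟨w, x, hx, hw, hs, rfl⟩
  exact ⟨w, x, hx, fun m hm => h.trans (hw m hm), by omega, rfl⟩

theorem sS_anti {n n' d : ℤ} (h : n ≤ n') : sS E B n' d ≤ sS E B n d := by
  refine Submodule.span_mono ?_
  rintro y ⟨w, x, hx, hw, hs, rfl⟩
  exact ⟨w, x, hx, fun m hm => h.trans (hw m hm), hs, rfl⟩

theorem sF_le_sup (d : ℤ) : sF E B d ≤ sS E B 1 d ⊔ sF E B (d - 1) := by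
  refine Submodule.span_le.2 ?_
  rintro y ⟨w, x, hx, hw, hs, rfl⟩
  by_cases h : w.sum = d
  · exact Submodule.mem_sup_left (Submodule.subset_span ⟨w, x, hx, hw, h, rfl⟩)
  · exact Submodule.mem_sup_right (Submodule.subset_span ⟨w, x, hx, hw, by omega, rfl⟩)

theorem sum_nonneg_of {w : List ℤ} (hw : ∀ m ∈ w, 1 ≤ m) : 0 ≤ w.sum :=
  List.sum_nonneg fun m hm => by have := hw m hm; omega

theorem sF_neg {d : ℤ} (h : d < 0) {u : M} (hu : u ∈ sF E B d) : u = 0 := by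
  suffices h : sF E B d ≤ ⊥ from (Submodule.mem_bot ℂ).1 (h hu)
  refine Submodule.span_le.2 ?_
  rintro y ⟨w, x, hx, hw, hs, rfl⟩
  have := sum_nonneg_of hw
  omega

theorem sF_zero : sF E B 0 ≤ B := by
  refine Submodule.span_le.2 ?_
  rintro y ⟨w, x, hx, hw, hs, rfl⟩
  cases w with
  | nil => exact hx
  | cons a w =>
    have h1 := sum_nonneg_of (w := w) fun m hm => hw m (by simp [hm])
    have h2 := hw a (by simp)
    simp at hs
    omega

theorem B_le_sF {d : ℤ} (h : 0 ≤ d) : B ≤ sF E B d := fun x hx =>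
  Submodule.subset_span ⟨[], x, hx, by simp, by simpa using h, rfl⟩

theorem sS_big {n d : ℤ} (hd : 1 ≤ d) (hn : d < n) : sS E B n d ≤ ⊥ := by
  refine Submodule.span_le.2 ?_
  rintro y ⟨w, x, hx, hw, hs, rfl⟩
  cases w with
  | nil => simp at hs; omega
  | cons a w =>
    have h1 := sum_nonneg_of (w := w) fun m hm => by
      have := hw m (by simp [hm]); omega
    have h2 := hw a (by simp)
    simp at hs
    omega

theorem sF_X {m d e : ℤ} (hm : 1 ≤ m) (he : d + m ≤ e) {u : M} (hu : u ∈ sF E B d) :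
    E (-m) u ∈ sF E B e := by
  refine span_maps ?_ hu
  rintro y ⟨w, x, hx, hw, hs, rfl⟩
  refine Submodule.subset_span ⟨m :: w, x, hx, ?_, ?_, rfl⟩
  · simpa [hm] using hw
  · simp; omega

theorem sS_X {n m d e : ℤ} (hm : n ≤ m) (he : d + m = e) {u : M} (hu : u ∈ sS E B n d) :
    E (-m) u ∈ sS E B n e := by
  refine span_maps ?_ hu
  rintro y ⟨w, x, hx, hw, hs, rfl⟩
  refine Submodule.subset_span ⟨m :: w, x, hx, ?_, ?_, rfl⟩
  · simpa [hm] using hw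
  · simp; omega

def hh (T k : ℤ) : ℤ := max (-k) (min 0 (T - k))

variable {l : ℂ} (hE : nsRel l E) {T : ℤ} (hT : 0 < T) (hTe : Even T)
  (h1 : ∀ k, 0 ≤ k → ∀ x ∈ B, E k x ∈ B) (h2 : ∀ k, T < k → ∀ x ∈ B, E k x = 0)
  (h3 : ∀ x ∈ B, E T x = 0 → x = 0)
  (h4 : ∀ p : Submodule ℂ M, B ≤ p → (∀ k, ∀ x ∈ p, E k x ∈ p) → p = ⊤)

theorem wd_E (hE : nsRel l E) (hT : 0 < T)
    (h1 : ∀ k, 0 ≤ k → ∀ x ∈ B, E k x ∈ B) (h2 : ∀ k, T < k → ∀ x ∈ B, E k x = 0)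
    (w : List ℤ) (hw : ∀ m ∈ w, 1 ≤ m) {x : M} (hx : x ∈ B) :
    ∀ k, E k (wd E w x) ∈ sF E B (w.sum + hh T k) := by
  induction w with
  | nil =>
    intro k
    by_cases hk : T < k
    · simp [wd, h2 k hk x hx]
    · by_cases hk0 : 0 ≤ k
      · exact B_le_sF (by simp [hh]; omega) (h1 k hk0 x hx)
      · have := sF_X (E := E) (B := B) (m := -k) (d := 0) (e := 0 + hh T k) (by omega)
          (by simp [hh]) (B_le_sF le_rfl hx)
        simpa [wd] using this
  | cons m w ih =>
    intro k
    have hm : 1 ≤ m := hw m (by simp)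
    have hw' : ∀ m ∈ w, 1 ≤ m := fun m hm => hw m (by simp [hm])
    have ih := ih hw'
    change E k (E (-m) (wd E w x)) ∈ _
    rw [hE.comm]
    have hsum : (m :: w).sum = m + w.sum := by simp
    rw [hsum]
    have hy : wd E w x ∈ sF E B w.sum := Submodule.subset_span ⟨w, x, hx, hw', le_rfl, rfl⟩
    refine add_mem (add_mem (Submodule.smul_mem _ _ ?_) (Submodule.smul_mem _ _ ?_)) ?_
    · exact sF_X hm (by omega) (ih k)
    · exact sF_mono (by simp [hh]; omega) (ih (k + -m))
    · by_cases hkm : k + -m = 0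
      · exact Submodule.smul_mem _ _ (sF_mono (by simp [hh]; omega) hy)
      · simp [nsZ, hkm]

include hE hT h1 h2 in
theorem sF_E {k d e : ℤ} (he : d + hh T k ≤ e) {u : M} (hu : u ∈ sF E B d) :
    E k u ∈ sF E B e := by
  refine span_maps ?_ hu
  rintro y ⟨w, x, hx, hw, hs, rfl⟩
  exact sF_mono (by omega) (wd_E hE hT h1 h2 w hw hx k)

include hE hT h1 h2 in
theorem sS_A {n d : ℤ} (hn : 1 ≤ n) {u : M} (hu : u ∈ sS E B (n + 1) d) :
    E (T + n) u ∈ sF E B (d - n - 1) := by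
  refine span_maps ?_ hu
  rintro y ⟨w, x, hx, hw, rfl, rfl⟩
  clear hu
  induction w with
  | nil => simp [wd, h2 (T + n) (by omega) x hx]
  | cons m w ih =>
    have hm : n + 1 ≤ m := hw m (by simp)
    have hw' : ∀ m ∈ w, n + 1 ≤ m := fun m hm => hw m (by simp [hm])
    have ih := ih hw'
    change E (T + n) (E (-m) (wd E w x)) ∈ _
    rw [hE.comm]
    have hsum : (m :: w).sum = m + w.sum := by simp
    rw [hsum]
    have hy : wd E w x ∈ sF E B w.sum := Submodule.subset_span
      ⟨w, x, hx, fun m hm => by have := hw' m hm; omega, le_rfl, rfl⟩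
    refine add_mem (add_mem (Submodule.smul_mem _ _ ?_) (Submodule.smul_mem _ _ ?_)) ?_
    · exact sF_X (by omega) (by omega) ih
    · exact sF_E hE hT h1 h2 (by simp [hh]; omega) hy
    · exact Submodule.smul_mem _ _ (sF_mono (by omega) hy)

theorem map_mem_of {p : Submodule ℂ M} {f : M →ₗ[ℂ] M} {x : M} (h : x ∈ p) : f x ∈ p.map f :=
  ⟨x, h, rfl⟩

theorem sG_le {n d : ℤ} : sS E B (n + 1) d ⊔ (sS E B n (d - n)).map (E (-n)) ≤ sS E B n d := by
  refine sup_le (sS_anti (by omega)) ?_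
  rintro _ ⟨s, hs, rfl⟩
  exact sS_X le_rfl (by omega) hs

theorem sS_neg {n d : ℤ} (hn : 1 ≤ n) (h : d < 0) {u : M} (hu : u ∈ sS E B n d) : u = 0 :=
  sF_neg h (sS_le_sF hn hu)

include hE in
theorem sS_split_even {n : ℤ} (hn : 1 ≤ n) : ∀ (N : ℕ) (d : ℤ), d < N →
    (sS E B n d ≤ sS E B (n + 1) d ⊔ (sS E B n (d - n)).map (E (-n))) ∧
    ∀ m, n ≤ m → ∀ u ∈ sS E B (n + 1) d ⊔ (sS E B n (d - n)).map (E (-n)),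
    E (-m) u ∈ sS E B (n + 1) (d + m) ⊔ (sS E B n (d + m - n)).map (E (-n)) := by
  intro N
  induction N with
  | zero =>
    intro d hd
    refine ⟨fun u hu => ?_, fun m hm u hu => ?_⟩
    · rw [sS_neg hn (by simpa using hd) hu]; exact zero_mem _
    · rw [sS_neg hn (by simpa using hd) (sG_le hu), map_zero]; exact zero_mem _
  | succ N ih =>
    intro d hd
    push_cast at hd
    have hle : sS E B n d ≤ sS E B (n + 1) d ⊔ (sS E B n (d - n)).map (E (-n)) := by
      refine Submodule.span_le.2 ?_
      rintro y ⟨w, x, hx, hw, rfl, rfl⟩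
      cases w with
      | nil =>
        exact Submodule.mem_sup_left (Submodule.subset_span ⟨[], x, hx, by simp, rfl, rfl⟩)
      | cons m w =>
        have hm : n ≤ m := hw m (by simp)
        have hw' : ∀ m ∈ w, n ≤ m := fun m hm => hw m (by simp [hm])
        have hsum : (m :: w).sum = w.sum + m := by simp [add_comm]
        rw [hsum] at hd ⊢
        have := ih w.sum (by omega)
        exact this.2 m hm _ (this.1 (Submodule.subset_span ⟨w, x, hx, hw', rfl, rfl⟩))
    refine ⟨hle, fun m hm u hu => ?_⟩
    rcases hm.eq_or_lt with rfl | hm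
    · refine Submodule.mem_sup_right (map_mem_of ?_)
      rw [add_sub_cancel_right]
      exact sG_le hu
    · obtain ⟨a, ha, _, ⟨s, hs, rfl⟩, rfl⟩ := Submodule.mem_sup.1 hu
      rw [map_add]
      refine add_mem (Submodule.mem_sup_left (sS_X (by omega) rfl ha)) ?_
      rw [hE.comm' (by omega)]
      refine add_mem (Submodule.smul_mem _ _ ?_) (Submodule.smul_mem _ _ ?_)
      · exact Submodule.mem_sup_right (map_mem_of (sS_X hm.le (by omega) hs))
      · have := ih (d - n) (by omega)
        have := this.2 (m + n) (by omega) s (this.1 hs)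
        rw [show d - n + (m + n) = d + m by ring, show -(m + n) = -m + -n by ring] at this
        exact this

include hE in
theorem sS_split_odd {n : ℤ} (hn : 1 ≤ n) (hno : ¬ Even n) (d : ℤ) :
    sS E B n d ≤ sS E B (n + 1) d ⊔ (sS E B (n + 1) (d - n)).map (E (-n)) := by
  refine Submodule.span_le.2 ?_
  rintro y ⟨w, x, hx, hw, rfl, rfl⟩
  induction w with
  | nil =>
    exact Submodule.mem_sup_left (Submodule.subset_span ⟨[], x, hx, by simp, rfl, rfl⟩)
  | cons m w ih =>
    have hm : n ≤ m := hw m (by simp)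
    have hw' : ∀ m ∈ w, n ≤ m := fun m hm => hw m (by simp [hm])
    have hsum : (m :: w).sum = w.sum + m := by simp [add_comm]
    rw [hsum]
    have ih := ih hw'
    change E (-m) (wd E w x) ∈ _
    obtain ⟨a, ha, _, ⟨s, hs, rfl⟩, e⟩ := Submodule.mem_sup.1 ih
    rw [← e, map_add]
    rcases hm.eq_or_lt with rfl | hm
    · refine add_mem (Submodule.mem_sup_right (map_mem_of ?_)) (Submodule.mem_sup_left ?_)
      · rw [add_sub_cancel_right]; exact ha
      · have h := hE.comm' (j := -n) (k := -n) (by omega) s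
        have h' : E (-n) (E (-n) s) = E (-(n + n)) s := by
          rw [show -(n + n) = -n + -n by ring]
          have e1 : nsS (-n) (-n) = -1 := by simp [nsS, hno]
          have e2 : nsC (-n) (-n) = 2 := by simp [nsC, hno]
          rw [e1, e2] at h
          have h2 : (2 : ℂ) • E (-n) (E (-n) s) = (2 : ℂ) • E (-n + -n) s := by
            linear_combination (norm := module) h
          exact smul_right_injective M (two_ne_zero (α := ℂ)) h2
        rw [h']
        exact sS_X (by omega) (by omega) hs
    · refine add_mem (Submodule.mem_sup_left (sS_X (by omega) rfl ha)) ?_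
      rw [hE.comm' (by omega)]
      refine add_mem (Submodule.smul_mem _ _ ?_) (Submodule.smul_mem _ _ ?_)
      · exact Submodule.mem_sup_right (map_mem_of (sS_X (by omega) (by omega) hs))
      · rw [show -m + -n = -(m + n) by ring]
        exact Submodule.mem_sup_left (sS_X (by omega) (by omega) hs)

theorem c_ne {n : ℤ} (hT : 0 < T) (hTe : Even T) (hn : 1 ≤ n) : nsC (T + n) (-n) ≠ 0 := by
  by_cases h : Even n
  · simp only [nsC, Int.even_add, hTe, h, even_neg, if_true]
    have : ((T + n : ℤ) : ℂ) - ((-n : ℤ) : ℂ) = ((T + n + n : ℤ) : ℂ) := by push_cast; ring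
    rw [this]
    have h' : (T + n + n : ℤ) ≠ 0 := by omega
    have : ((T + n + n : ℤ) : ℂ) ≠ 0 := by exact_mod_cast h'
    simpa using this
  · simp [nsC, Int.even_add, hTe, h]

def QQ (E : ℤ → M →ₗ[ℂ] M) (B : Submodule ℂ M) (T d : ℤ) : Prop :=
  ∀ u ∈ sF E B d, E T u ∈ sF E B (d - 1) → u ∈ sF E B (d - 1)

def PP (E : ℤ → M →ₗ[ℂ] M) (B : Submodule ℂ M) (T d : ℤ) : Prop :=
  ∀ u ∈ sF E B d, (∀ n, 1 ≤ n → E (T + n) u ∈ sF E B (d - n - 1)) → u ∈ sF E B (d - 1)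

include hE hT hTe h1 h2 in
theorem even_claim {n d : ℤ} (hn : 1 ≤ n) (hne : Even n) (hQ : ∀ e < d, QQ E B T e) :
    ∀ (N : ℕ) (e : ℤ), e < N → e < d → ∀ (a : ℕ), ∀ u ∈ sF E B e,
      (((a : ℂ) + 1) * nsC (T + n) (-n)) • E T u + E (-n) (E (T + n) u) ∈ sF E B (e - 1) →
      u ∈ sF E B (e - 1) := by
  intro N
  induction N with
  | zero =>
    intro e he _ a u hu _
    rw [sF_neg (by simpa using he) hu]; exact zero_mem _
  | succ N ih =>
    intro e he hed a u hu h
    push_cast at he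
    have hc := c_ne (T := T) hT hTe hn
    set c := nsC (T + n) (-n)
    have hy : E (T + n) u ∈ sF E B (e - n) := sF_E hE hT h1 h2 (by simp [hh]; omega) hu
    have hDh : E (T + n) ((((a : ℂ) + 1) * c) • E T u + E (-n) (E (T + n) u))
        ∈ sF E B (e - n - 1) := sF_E hE hT h1 h2 (by simp [hh]; omega) h
    have k1 := hE.comm' (j := T + n) (k := T) (by omega) u
    have k2 := hE.comm' (j := T + n) (k := -n) (by omega) (E (T + n) u)
    have s1 : nsS (T + n) T = 1 := by simp [nsS, hTe]
    have s2 : nsS (T + n) (-n) = 1 := by simp [nsS, hne]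
    rw [s1] at k1
    rw [s2, show T + n + -n = T by ring] at k2
    have hl : E (T + n + T) u ∈ sF E B (e - n - 1) :=
      sF_E hE hT h1 h2 (by simp [hh]; omega) hu
    have hyl : E (T + n) u ∈ sF E B (e - n - 1) := by
      refine ih (e - n) (by omega) (by omega) (a + 1) _ hy ?_
      have e1 : ((((a + 1 : ℕ) : ℂ) + 1) * c) • E T (E (T + n) u)
          + E (-n) (E (T + n) (E (T + n) u))
          = E (T + n) ((((a : ℂ) + 1) * c) • E T u + E (-n) (E (T + n) u))
            - (((a : ℂ) + 1) * c * nsC (T + n) T) • E (T + n + T) u := by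
        rw [map_add, map_smul, k1, k2]
        push_cast
        module
      rw [e1]
      exact sub_mem hDh (Submodule.smul_mem _ _ hl)
    have hX : E (-n) (E (T + n) u) ∈ sF E B (e - 1) := sF_X hn (by omega) hyl
    have hZ : (((a : ℂ) + 1) * c) • E T u ∈ sF E B (e - 1) := by
      have := sub_mem h hX
      rwa [add_sub_cancel_right] at this
    have hne0 : ((a : ℂ) + 1) * c ≠ 0 := mul_ne_zero (by exact_mod_cast Nat.succ_ne_zero a) hc
    exact hQ e hed u hu ((Submodule.smul_mem_iff _ hne0).1 hZ)

include hE hT hTe h1 h2 in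
theorem step_n {n d : ℤ} (hn : 1 ≤ n) (hQ : ∀ e < d, QQ E B T e) {u : M}
    (hu : u ∈ sS E B n d ⊔ sF E B (d - 1)) (hA : E (T + n) u ∈ sF E B (d - n - 1)) :
    u ∈ sS E B (n + 1) d ⊔ sF E B (d - 1) := by
  obtain ⟨v, hv, r, hr, rfl⟩ := Submodule.mem_sup.1 hu
  have hrA : E (T + n) r ∈ sF E B (d - n - 1) := sF_E hE hT h1 h2 (by simp [hh]; omega) hr
  have hvA : E (T + n) v ∈ sF E B (d - n - 1) := by
    have := sub_mem hA hrA
    rwa [map_add, add_sub_cancel_right] at this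
  refine add_mem ?_ (Submodule.mem_sup_right hr)
  have hc := c_ne (T := T) hT hTe hn
  by_cases hne : Even n
  · have := (sS_split_even hE (B := B) hn (d + 1).toNat d (by omega)).1 hv
    obtain ⟨a, ha, _, ⟨s, hs, rfl⟩, rfl⟩ := Submodule.mem_sup.1 this
    refine add_mem (Submodule.mem_sup_left ha) (Submodule.mem_sup_right ?_)
    have haA := sS_A hE hT h1 h2 hn ha
    have hsA : E (T + n) (E (-n) s) ∈ sF E B (d - n - 1) := by
      have := sub_mem hvA haA
      rwa [map_add, add_sub_cancel_left] at this
    rw [hE.comm' (by omega)] at hsA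
    have s2 : nsS (T + n) (-n) = 1 := by simp [nsS, hne]
    rw [s2, show T + n + -n = T by ring] at hsA
    refine sF_X (d := d - n - 1) hn (by omega) ?_
    refine even_claim hE hT hTe h1 h2 hn hne hQ (d - n + 1).toNat (d - n) (by omega) (by omega) 0 s
      (sS_le_sF hn hs) ?_
    convert hsA using 1
    push_cast
    module
  · have := (sS_split_odd hE (B := B) hn hne d) hv
    obtain ⟨a, ha, _, ⟨s, hs, rfl⟩, rfl⟩ := Submodule.mem_sup.1 this
    refine add_mem (Submodule.mem_sup_left ha) (Submodule.mem_sup_right ?_)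
    have haA := sS_A hE hT h1 h2 hn ha
    have hsA : E (T + n) (E (-n) s) ∈ sF E B (d - n - 1) := by
      have := sub_mem hvA haA
      rwa [map_add, add_sub_cancel_left] at this
    rw [hE.comm' (by omega), show T + n + -n = T by ring] at hsA
    refine sF_X (d := d - n - 1) hn (by omega) ?_
    have hy := sS_A hE hT h1 h2 hn hs
    have hXy : E (-n) (E (T + n) s) ∈ sF E B (d - n - 1) := sF_X hn (by omega) hy
    have hZ := sub_mem hsA (Submodule.smul_mem _ (nsS (T + n) (-n)) hXy)
    rw [add_sub_cancel_left] at hZ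
    exact hQ (d - n) (by omega) s (sS_le_sF (by omega) hs) ((Submodule.smul_mem_iff _ hc).1 hZ)

include hE hT hTe h1 h2 in
theorem PP_of_QQ {d : ℤ} (hd : 1 ≤ d) (hQ : ∀ e < d, QQ E B T e) : PP E B T d := by
  intro u hu hA
  have key : ∀ n : ℕ, u ∈ sS E B ((n : ℤ) + 1) d ⊔ sF E B (d - 1) := by
    intro n
    induction n with
    | zero => simpa using sF_le_sup d hu
    | succ n ih =>
      have := step_n hE hT hTe h1 h2 (by omega) hQ ih (hA _ (by omega))
      simpa using this
  have h := key d.toNat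
  have : sS E B ((d.toNat : ℤ) + 1) d ⊔ sF E B (d - 1) ≤ sF E B (d - 1) :=
    sup_le ((sS_big hd (by omega)).trans bot_le) le_rfl
  exact this h

include hE hT hTe h1 h2 h3 in
theorem QQ_all : ∀ (N : ℕ) (d : ℤ), d < N → QQ E B T d := by
  intro N
  induction N with
  | zero =>
    intro d hd u hu _
    rw [sF_neg (by simpa using hd) hu]; exact zero_mem _
  | succ N ih =>
    intro d hd
    push_cast at hd
    by_cases hdN : d < N
    · exact ih d hdN
    obtain rfl : d = N := by omega
    intro u hu hZ
    by_cases hN : N = 0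
    · subst hN
      have := sF_neg (by simp) hZ
      rw [h3 u (sF_zero (by simpa using hu)) this]
      exact zero_mem _
    · refine PP_of_QQ hE hT hTe h1 h2 (by omega) ih u hu fun n hn => ?_
      refine ih (N - n) (by omega) _ (sF_E hE hT h1 h2 (by simp [hh]; omega) hu) ?_
      have k1 := hE.comm' (j := T + n) (k := T) (by omega) u
      have s1 : nsS (T + n) T = 1 := by simp [nsS, hTe]
      rw [s1] at k1
      have e1 : E T (E (T + n) u) = E (T + n) (E T u) - nsC (T + n) T • E (T + n + T) u := by
        rw [k1]; module
      rw [e1]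
      exact sub_mem (sF_E hE hT h1 h2 (by simp [hh]; omega) hZ)
        (Submodule.smul_mem _ _ (sF_E hE hT h1 h2 (by simp [hh]; omega) hu))

include hE hT h1 h2 h4 in
theorem sF_exh (u : M) : ∃ d : ℕ, u ∈ sF E B d := by
  have hdir : Directed (· ≤ ·) (fun d : ℕ => sF E B (d : ℤ)) :=
    (show Monotone (fun d : ℕ => sF E B (d : ℤ)) from
      fun a b h => sF_mono (by exact_mod_cast h)).directed_le
  have htop : (⨆ d : ℕ, sF E B (d : ℤ)) = ⊤ := by
    refine h4 _ ?_ ?_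
    · exact (B_le_sF (by simp)).trans (le_iSup (fun d : ℕ => sF E B (d : ℤ)) 0)
    · intro k x hx
      obtain ⟨d, hd⟩ := (Submodule.mem_iSup_of_directed _ hdir).1 hx
      refine (Submodule.mem_iSup_of_directed _ hdir).2 ⟨(d + hh T k).toNat, ?_⟩
      exact sF_E hE hT h1 h2 (by omega) hd
  exact (Submodule.mem_iSup_of_directed _ hdir).1 (htop ▸ Submodule.mem_top)

include hE hT hTe h1 h2 h3 h4 in
theorem meets_B (p : Submodule ℂ M) (hp : ∀ k, ∀ x ∈ p, E k x ∈ p) (u : M) (hu : u ∈ p)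
    (hu0 : u ≠ 0) : ∃ x ∈ B, x ≠ 0 ∧ x ∈ p := by
  have key : ∀ (d : ℕ), ∀ u ∈ sF E B d, u ∈ p → u ≠ 0 → ∃ x ∈ B, x ≠ 0 ∧ x ∈ p := by
    intro d
    induction d using Nat.strong_induction_on with
    | _ d ih =>
      intro u hu hup hu0
      by_cases hd : d = 0
      · subst hd
        exact ⟨u, sF_zero (by simpa using hu), hu0, hup⟩
      by_cases hlow : u ∈ sF E B ((d : ℤ) - 1)
      · exact ih (d - 1) (by omega) u (sF_mono (by omega) hlow) hup hu0
      have hP : PP E B T d := PP_of_QQ hE hT hTe h1 h2 (by omega)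
        fun e he => QQ_all hE hT hTe h1 h2 h3 d e he
      have : ∃ n, 1 ≤ n ∧ E (T + n) u ∉ sF E B ((d : ℤ) - n - 1) := by
        by_contra hcon
        push Not at hcon
        exact hlow (hP u hu hcon)
      obtain ⟨n, hn, hnot⟩ := this
      have hne : E (T + n) u ≠ 0 := fun h => hnot (by rw [h]; exact zero_mem _)
      have hmem : E (T + n) u ∈ sF E B ((d : ℤ) - n) :=
        sF_E hE hT h1 h2 (by simp [hh]; omega) hu
      have hdn : 0 ≤ (d : ℤ) - n := by
        by_contra hneg
        exact hne (sF_neg (by omega) hmem)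
      exact ih ((d : ℤ) - n).toNat (by omega) _ (sF_mono (by omega) hmem) (hp _ _ hup) hne
  obtain ⟨d, hd⟩ := sF_exh hE hT h1 h2 h4 u
  exact key d u hd hu hu0

include hE hT h1 h2 h4 in
theorem restricted_E (u : M) : ∃ N : ℤ, ∀ k, N ≤ k → E k u = 0 := by
  obtain ⟨d, hd⟩ := sF_exh hE hT h1 h2 h4 u
  refine ⟨T + d + 1, fun k hk => ?_⟩
  have : E k u ∈ sF E B (-1) := sF_E hE hT h1 h2 (by simp [hh]; omega) hd
  exact sF_neg (by omega) this

def nilS (f : Module.End ℂ M) : Submodule ℂ M where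
  carrier := {u | ∃ n : ℕ, (f ^ n) u = 0}
  zero_mem' := ⟨0, by simp⟩
  add_mem' := by
    rintro a b ⟨n, hn⟩ ⟨m, hm⟩
    refine ⟨n + m, ?_⟩
    have h1 : (f ^ (n + m)) a = 0 := by
      rw [add_comm, pow_add, Module.End.mul_apply, hn, map_zero]
    have h2 : (f ^ (n + m)) b = 0 := by
      rw [pow_add, Module.End.mul_apply, hm, map_zero]
    rw [map_add, h1, h2, add_zero]
  smul_mem' := by
    rintro c a ⟨n, hn⟩
    exact ⟨n, by simp [hn]⟩

theorem nilS_of {f : Module.End ℂ M} {u : M} (h : f u ∈ nilS f) : u ∈ nilS f := by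
  obtain ⟨n, hn⟩ := h
  exact ⟨n + 1, by rw [pow_succ, Module.End.mul_apply, hn]⟩

include hE hT h1 h2 h4 in
theorem nilp_E {k : ℤ} (hk : T < k) (u : M) :
    ∃ n : ℕ, ((E k : Module.End ℂ M) ^ n) u = 0 := by
  suffices h : nilS (E k) = ⊤ by
    have : u ∈ nilS (E k) := h ▸ Submodule.mem_top
    exact this
  refine h4 _ (fun x hx => ⟨1, by simpa using h2 k hk x hx⟩) ?_
  rintro j x ⟨n, hn⟩
  revert j
  induction n generalizing x with
  | zero =>
    intro j
    have : x = 0 := by simpa using hn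
    rw [this, map_zero]; exact zero_mem _
  | succ n ih =>
    have hx : x ∈ nilS (E k) := ⟨n + 1, hn⟩
    have ih := ih (E k x) (by rwa [pow_succ, Module.End.mul_apply] at hn)
    obtain ⟨N, hN⟩ := restricted_E hE hT h1 h2 h4 x
    have key : ∀ (r : ℕ) (j : ℤ), N ≤ j + r → E j x ∈ nilS (E k) := by
      intro r
      induction r with
      | zero =>
        intro j hj
        rw [hN j (by simpa using hj)]; exact zero_mem _
      | succ r ihr =>
        intro j hj
        push_cast at hj
        apply nilS_of
        rw [hE.comm]
        exact add_mem (add_mem (Submodule.smul_mem _ _ (ih j))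
          (Submodule.smul_mem _ _ (ihr _ (by omega)))) (Submodule.smul_mem _ _ hx)
    intro j
    exact key (N - j).toNat j (by omega)

end Main

/-! ### Application to the induced module -/

theorem ind_generated (V : BRep) (l : ℂ) (M : NSRep) (i : V.carrier →ₗ[ℂ] M.carrier)
    (hind : IsInduced l V M i) (p : Submodule ℂ M.carrier) (hB : LinearMap.range i ≤ p)
    (hp : ∀ k, ∀ x ∈ p, M.nsE k x ∈ p) : p = ⊤ := by
  obtain ⟨_, hc, huniv⟩ := hind
  let Eq : ℤ → (M.carrier ⧸ p) →ₗ[ℂ] (M.carrier ⧸ p) :=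
    fun k => p.mapQ p (M.nsE k) (fun x hx => hp k x hx)
  have hrel : nsRel l Eq := by
    intro j k u
    obtain ⟨u, rfl⟩ := Submodule.Quotient.mk_surjective _ u
    have := congrArg (Submodule.Quotient.mk (p := p)) (M.nsE_rel l hc j k u)
    simpa [nsD, Eq] using this
  let W := nsRepOf l Eq hrel
  have hW : W.HasCentralCharge l := fun v => rfl
  let f : V.carrier →ₗ[ℂ] W.carrier := 0
  have hf : IsBLinear V W f := by
    constructor <;> intro m v <;> simp [f]
  obtain ⟨F, _, hu⟩ := huniv W hW f hf
  have a1 : (p.mkQ : M.carrier →ₗ[ℂ] W.carrier) = F := by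
    refine hu _ ⟨⟨?_, ?_, ?_⟩, ?_⟩
    · intro m v
      change p.mkQ (M.L m v) = p.mkQ (M.nsE (2 * m) v)
      rw [M.nsE_even]
    · intro m v
      change p.mkQ (M.G m v) = p.mkQ (M.nsE (2 * m - 1) v)
      rw [M.nsE_odd]
    · intro v
      rw [hc v]
      exact p.mkQ.map_smul l v
    · ext v
      exact (Submodule.Quotient.mk_eq_zero p).2 (hB ⟨v, rfl⟩)
  have a2 : (0 : M.carrier →ₗ[ℂ] W.carrier) = F := by
    refine hu _ ⟨⟨?_, ?_, ?_⟩, ?_⟩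
    · intro m v; simp
    · intro m v; simp
    · intro v; simp
    · simp [f]
  have a3 : p.mkQ = 0 := a1.trans a2.symm
  rw [← p.ker_mkQ, a3, LinearMap.ker_zero]

theorem BRep.G_vanish (V : BRep) (hV : V.IsSimple) (t : ℕ) (ht : 0 < t)
    (hvan : ∀ i : ℕ, t < i → ∀ v : V.carrier, V.L i v = 0) (m : ℕ) (hm : t ≤ m) (v : V.carrier) :
    V.G m v = 0 := by
  have hbig : ∀ m : ℕ, t < m → ∀ v, V.G m v = 0 := by
    intro m hm v
    have := V.rel_LG m 0 v
    rw [hvan m hm, hvan m hm, map_zero, sub_zero, add_zero] at this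
    have hne : (((m : ℂ) - 2 * ((0 : ℕ) : ℂ) - 1) / 2) ≠ 0 := by
      have : (m : ℂ) ≠ 1 := by
        have : m ≠ 1 := by omega
        exact_mod_cast this
      simpa [sub_eq_zero] using this
    exact (smul_eq_zero.1 this.symm).resolve_left hne
  rcases hm.eq_or_lt with rfl | hm
  · have hinv : V.Invariant (LinearMap.ker (V.G t)) := by
      constructor
      · intro i v hv
        rw [LinearMap.mem_ker] at hv ⊢
        have := V.rel_LG i t v
        rw [hv, map_zero, zero_sub] at this
        rw [← neg_eq_zero, this]
        rcases Nat.eq_zero_or_pos i with rfl | hi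
        · rw [zero_add, hv, smul_zero]
        · rw [hbig _ (by omega), smul_zero]
      · intro j v hv
        rw [LinearMap.mem_ker] at hv ⊢
        have := V.rel_GG t j v
        rwa [hv, map_zero, add_zero, hvan _ (by omega), smul_zero] at this
    rcases hV.2 (LinearMap.ker (V.G t)) hinv with h | h
    · obtain ⟨w, hw⟩ := hV.1
      have hsq : ∀ v, V.G t (V.G t v) = 0 := by
        intro v
        have := V.rel_GG t t v
        rw [hvan _ (by omega), smul_zero, ← two_smul ℂ] at this
        exact (smul_eq_zero.1 this).resolve_left two_ne_zero
      have hk : ∀ v, V.G t v = 0 → v = 0 := by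
        intro v hv
        have : v ∈ LinearMap.ker (V.G t) := hv
        rw [h] at this
        simpa using this
      exact absurd (hk w (hk _ (hsq w))) hw
    · have : v ∈ LinearMap.ker (V.G t) := h ▸ Submodule.mem_top
      exact this
  · exact hbig m hm v

/-- Let `V` be a simple `b`-module, `t ∈ ℤ_+` with the action of `L_t` on `V`
injective and `L_i V = 0` for all `i > t`, and let `ℓ ∈ ℂ`. Then on `Ind_ℓ(V)` the actions of
`L_i` and `G_{i-1/2}` for all integers `i > t` are locally nilpotent; consequently `Ind_ℓ(V)`
is a simple restricted Neveu–Schwarz module of central charge `ℓ`. -/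
theorem induced_module_locally_nilpotent_simple_restricted
    (V : BRep) (hV : V.IsSimple) (t : ℕ) (ht : 0 < t)
    (hinj : Function.Injective (V.L t))
    (hvan : ∀ i : ℕ, t < i → ∀ v : V.carrier, V.L i v = 0)
    (ℓ : ℂ) (M : NSRep) (ι : V.carrier →ₗ[ℂ] M.carrier)
    (hind : IsInduced ℓ V M ι) :
    (∀ i : ℤ, (t : ℤ) < i →
      LocallyNilpotentEnd (M.L i) ∧ LocallyNilpotentEnd (M.G i)) ∧
    M.IsSimple ∧ M.IsRestricted ∧ M.HasCentralCharge ℓ := by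
  have hι := ind_injective V ℓ M ι hind
  have hgen := ind_generated V ℓ M ι hind
  obtain ⟨⟨hbL, hbG⟩, hc, -⟩ := hind
  have hE := M.nsE_rel ℓ hc
  have hb : ∀ k : ℤ, 0 ≤ k → ∀ v, M.nsE k (ι v) = ι (V.nsE k v) := by
    intro k hk v
    rcases nat_cases hk with ⟨m, rfl⟩ | ⟨m, rfl⟩
    · rw [M.nsE_even, V.nsE_even, hbL]
    · rw [V.nsE_odd, hbG, show 2 * (m : ℤ) + 1 = 2 * ((m : ℤ) + 1) - 1 by ring, M.nsE_odd]
  have hT : (0 : ℤ) < 2 * (t : ℤ) := by omega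
  have hTe : Even (2 * (t : ℤ)) := by simp
  have h1 : ∀ k : ℤ, 0 ≤ k → ∀ x ∈ LinearMap.range ι, M.nsE k x ∈ LinearMap.range ι := by
    rintro k hk _ ⟨v, rfl⟩
    exact ⟨_, (hb k hk v).symm⟩
  have h2 : ∀ k : ℤ, 2 * (t : ℤ) < k → ∀ x ∈ LinearMap.range ι, M.nsE k x = 0 := by
    rintro k hk _ ⟨v, rfl⟩
    have hk0 : 0 ≤ k := by omega
    rw [hb k hk0]
    rcases nat_cases hk0 with ⟨m, rfl⟩ | ⟨m, rfl⟩
    · rw [V.nsE_even, hvan m (by omega), map_zero]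
    · rw [V.nsE_odd, V.G_vanish hV t ht hvan m (by omega), map_zero]
  have h3 : ∀ x ∈ LinearMap.range ι, M.nsE (2 * (t : ℤ)) x = 0 → x = 0 := by
    rintro _ ⟨v, rfl⟩ h
    rw [hb _ hT.le, V.nsE_even] at h
    have : V.L t v = 0 := hι (by rw [h, map_zero])
    have : v = 0 := hinj (by rw [this, map_zero])
    rw [this, map_zero]
  refine ⟨fun i hi => ⟨fun v => ?_, fun v => ?_⟩, ⟨?_, ?_⟩, ?_, hc⟩
  · obtain ⟨n, hn⟩ := nilp_E hE hT h1 h2 hgen (k := 2 * i) (by omega) v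
    rw [M.nsE_even] at hn
    exact ⟨n + 1, by omega, by rw [pow_succ', Module.End.mul_apply, hn, map_zero]⟩
  · obtain ⟨n, hn⟩ := nilp_E hE hT h1 h2 hgen (k := 2 * i - 1) (by omega) v
    rw [M.nsE_odd] at hn
    exact ⟨n + 1, by omega, by rw [pow_succ', Module.End.mul_apply, hn, map_zero]⟩
  · obtain ⟨v, hv⟩ := hV.1
    exact ⟨ι v, fun h => hv (hι (by rw [h, map_zero]))⟩
  · intro p hp
    have hpE : ∀ k : ℤ, ∀ x ∈ p, M.nsE k x ∈ p := by
      intro k x hx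
      rcases int_cases k with ⟨m, rfl⟩ | ⟨m, rfl⟩
      · rw [M.nsE_even]; exact hp.1 m x hx
      · rw [M.nsE_odd]; exact hp.2.1 m x hx
    by_cases hbot : p = ⊥
    · exact Or.inl hbot
    right
    obtain ⟨u, hu, hu0⟩ := (Submodule.ne_bot_iff p).1 hbot
    obtain ⟨_, ⟨v, rfl⟩, hx0, hxp⟩ := meets_B hE hT hTe h1 h2 h3 hgen p hpE u hu hu0
    have hcom : p.comap ι = ⊤ := by
      refine (hV.2 (p.comap ι) ⟨?_, ?_⟩).resolve_left ?_
      · intro i v hv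
        rw [Submodule.mem_comap] at hv ⊢
        rw [hbL]; exact hp.1 _ _ hv
      · intro j v hv
        rw [Submodule.mem_comap] at hv ⊢
        rw [hbG]; exact hp.2.1 _ _ hv
      · intro h
        have hv : v ∈ p.comap ι := hxp
        rw [h, Submodule.mem_bot] at hv
        exact hx0 (by rw [hv, map_zero])
    refine hgen p ?_ hpE
    rintro _ ⟨v, rfl⟩
    have : v ∈ p.comap ι := hcom ▸ Submodule.mem_top
    exact this
  · intro v
    obtain ⟨N, hN⟩ := restricted_E hE hT h1 h2 hgen v
    refine ⟨max N 0 + 1, fun i hi => ?_⟩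
    rw [← M.nsE_even, ← M.nsE_odd]
    exact ⟨hN _ (by omega), hN _ (by omega)⟩
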